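/- arXiv:1403.5926 — 2 statements merged into one kernel-verified Lean document; each statement's English description precedes it below -/
import Mathlib

section
/- Let f : [1,∞) → [1,∞) be differentiable and monotonically increasing with ∫_t^∞ da/(a·f(a)) < ∞ for every t ≥ 1, assume that t ↦ f(t)/t^{1/2} is antitone (decreasing) on [1,∞), and define g(t) := (∫_t^∞ da/(a·f(a)))^{-1}. Then for every t > 1 one has g(t)/f(t) + t·f'(t)/f(t) ≤ 1. -/
open MeasureTheory

/-!
If `f a / a ^ p` is maximal over `a ≥ t` at `a = t`, with value `C`, then `f a ≤ C * a ^ p` with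
equality at `t`. Integrating `1 / (a * f a) ≥ C⁻¹ * a ^ (-p - 1)` over the tail bounds `g t / f t`
by `p`, and the sign of the right derivative of `f a / a ^ p` at `t` bounds `t * f' t / f t` by `p`.
Both bounds are attained by `f a = a ^ p`; for `p = 1 / 2` they add up to `1`.
-/

section

open Set

variable {f : ℝ → ℝ} {f' C a p t y : ℝ}

theorem integral_Ioi_rpow_neg_sub_one (hp : 0 < p) (ht : 0 < t) :
    ∫ a in Ioi t, a ^ (-p - 1) = t ^ (-p) / p := by
  rw [integral_Ioi_rpow_of_lt (by linarith) ht, sub_add_cancel, neg_div_neg_eq]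

theorem inv_mul_rpow_neg_sub_one_le_one_div_mul (ha : 0 < a) (hy : 0 < y) (h : y / a ^ p ≤ C) :
    C⁻¹ * a ^ (-p - 1) ≤ 1 / (a * y) := by
  calc C⁻¹ * a ^ (-p - 1) ≤ (y / a ^ p)⁻¹ * a ^ (-p - 1) := by gcongr
    _ = 1 / (a * y) := by
        rw [Real.rpow_sub_one ha.ne', Real.rpow_neg ha.le]
        field_simp

theorem one_div_mul_le_integral_Ioi_of_isMaxOn_div_rpow (hp : 0 < p) (ht : 0 < t)
    (hf_pos : ∀ a ≥ t, 0 < f a) (hf_int : IntegrableOn (fun a => 1 / (a * f a)) (Ioi t))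
    (hf_max : IsMaxOn (fun a => f a / a ^ p) (Ici t) t) :
    1 / (p * f t) ≤ ∫ a in Ioi t, 1 / (a * f a) := by
  have h_int : IntegrableOn (fun a => (f t / t ^ p)⁻¹ * a ^ (-p - 1)) (Ioi t) :=
    (integrableOn_Ioi_rpow_of_lt (by linarith) ht).const_mul _
  have h_le : ∀ a ∈ Ioi t, (f t / t ^ p)⁻¹ * a ^ (-p - 1) ≤ 1 / (a * f a) :=
    fun a (hta : t < a) => inv_mul_rpow_neg_sub_one_le_one_div_mul (ht.trans hta)
      (hf_pos a hta.le) (hf_max hta.le)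
  have htp : t ^ p ≠ 0 := (Real.rpow_pos_of_pos ht p).ne'
  calc 1 / (p * f t) = (f t / t ^ p)⁻¹ * (t ^ (-p) / p) := by
        rw [Real.rpow_neg ht.le]
        field_simp
    _ = ∫ a in Ioi t, (f t / t ^ p)⁻¹ * a ^ (-p - 1) := by
        rw [integral_const_mul, integral_Ioi_rpow_neg_sub_one hp ht]
    _ ≤ ∫ a in Ioi t, 1 / (a * f a) :=
        setIntegral_mono_on h_int hf_int measurableSet_Ioi h_le

theorem hasDerivWithinAt_nonpos_of_isLocalMaxOn_Ici (hf : HasDerivWithinAt f f' (Ici t) t)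
    (hf_max : IsLocalMaxOn f (Ici t) t) : f' ≤ 0 := by
  have h_right : (1 : ℝ) ∈ posTangentConeAt (Ici t) t :=
    mem_posTangentConeAt_of_segment_subset <| by
      simpa only [segment_eq_Icc (le_add_of_nonneg_right zero_le_one)] using Icc_subset_Ici_self
  simpa using hf_max.hasFDerivWithinAt_nonpos hf.hasFDerivWithinAt h_right

theorem mul_deriv_le_of_isLocalMaxOn_div_rpow (ht : 0 < t)
    (hf : HasDerivWithinAt f f' (Ici t) t)
    (hf_max : IsLocalMaxOn (fun a => f a / a ^ p) (Ici t) t) :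
    t * f' ≤ p * f t := by
  have htp : 0 < t ^ p := Real.rpow_pos_of_pos ht p
  have h_deriv : HasDerivWithinAt (fun a => f a / a ^ p)
      ((f' * t ^ p - f t * (p * t ^ (p - 1))) / (t ^ p) ^ 2) (Ici t) t :=
    hf.div (Real.hasDerivAt_rpow_const (.inl ht.ne')).hasDerivWithinAt htp.ne'
  have h_eq : (f' * t ^ p - f t * (p * t ^ (p - 1))) / (t ^ p) ^ 2 =
      (t * f' - p * f t) / (t * t ^ p) := by
    rw [Real.rpow_sub_one ht.ne']
    field_simp
  have h_nonpos : (t * f' - p * f t) / (t * t ^ p) ≤ 0 :=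
    h_eq ▸ hasDerivWithinAt_nonpos_of_isLocalMaxOn_Ici h_deriv hf_max
  rw [div_le_iff₀ (by positivity), zero_mul] at h_nonpos
  exact sub_nonpos.mp h_nonpos

theorem g_div_f_add_logDeriv_le_one_general (hp : 0 < p) (ht : 0 < t)
    (hf_diff : DifferentiableAt ℝ f t) (hf_pos : ∀ a ≥ t, 0 < f a)
    (hf_int : IntegrableOn (fun a => 1 / (a * f a)) (Ioi t))
    (hf_max : IsMaxOn (fun a => f a / a ^ p) (Ici t) t) :
    (∫ a in Ioi t, 1 / (a * f a))⁻¹ / f t + t * deriv f t / f t ≤ 2 * p := by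
  have hft : 0 < f t := hf_pos t le_rfl
  have h_tail : (∫ a in Ioi t, 1 / (a * f a))⁻¹ ≤ p * f t :=
    inv_le_of_inv_le₀ (by positivity) <| by
      simpa only [one_div] using
        one_div_mul_le_integral_Ioi_of_isMaxOn_div_rpow hp ht hf_pos hf_int hf_max
  have h_deriv : t * deriv f t ≤ p * f t :=
    mul_deriv_le_of_isLocalMaxOn_div_rpow ht hf_diff.hasDerivAt.hasDerivWithinAt hf_max.localize
  rw [← add_div, div_le_iff₀ hft]
  linarith

end

/-- Inequality (2.3): if `f : [1,∞) → [1,∞)` is differentiable, increasing, has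
finite tail integrals and `f(t)/t^{1/2}` is decreasing, then with
`g(t) := (∫_t^∞ da/(a f(a)))⁻¹` one has `g(t)/f(t) + t f'(t)/f(t) ≤ 1` for `t > 1`. -/
theorem g_div_f_add_logDeriv_le_one (f : ℝ → ℝ)
    (hf_diff : ∀ t ≥ (1 : ℝ), DifferentiableAt ℝ f t)
    (hf_mono : MonotoneOn f (Set.Ici 1))
    (hf_ge : ∀ t ≥ (1 : ℝ), 1 ≤ f t)
    (hf_int : ∀ t ≥ (1 : ℝ), IntegrableOn (fun a => 1 / (a * f a)) (Set.Ioi t))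
    (hf_anti : AntitoneOn (fun t => f t / t ^ ((1 : ℝ) / 2)) (Set.Ici 1)) :
    ∀ t > (1 : ℝ),
      (∫ a in Set.Ioi t, 1 / (a * f a))⁻¹ / f t + t * deriv f t / f t ≤ 1 := by
  intro t ht
  exact (g_div_f_add_logDeriv_le_one_general one_half_pos (one_pos.trans ht) (hf_diff t ht.le)
    (fun a ha => one_pos.trans_le (hf_ge a (ht.le.trans ha))) (hf_int t ht.le)
    fun a ha => hf_anti ht.le (ht.le.trans ha) ha).trans_eq (by norm_num)
end

section
/- Let f : [1,∞) → [1,∞) be continuously differentiable and monotonically increasing with ∫_t^∞ da/(a·f(a)) < ∞ for every t ≥ 1, and define g(t) := (∫_t^∞ da/(a·f(a)))^{-1}. Suppose η ∈ (0,1) satisfies g(t)/f(t) + t·f'(t)/f(t) ≤ η for all t > 1. Then the function ω(δ) := g(δ^{-1/η})^{-2} is concave on (0,1). -/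
open MeasureTheory
open Set

/-!
Put `t = δ^{-1/η}`, so that `δ⁻¹ = t^η`. The chain rule gives `ω'(δ) = (2/η) · t^η / (g(t) f(t))`,
and the logarithmic derivative of `t^η / (g(t) f(t))` is `(η - g(t)/f(t) - t f'(t)/f(t)) / t`,
which the hypothesis makes nonnegative. As `t` decreases when `δ` increases, `ω'` is decreasing.
-/

theorem hasDerivAt_setIntegral_Ioi {E : Type*} [NormedAddCommGroup E] [NormedSpace ℝ E]
    [CompleteSpace E] {h : ℝ → E} {s t : ℝ} (hst : s < t) (hint : IntegrableOn h (Ioi s))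
    (hcont : ContinuousAt h t) :
    HasDerivAt (fun u => ∫ a in Ioi u, h a) (-h t) t := by
  have hprim : HasDerivAt (fun u => ∫ a in s..u, h a) (h t) t :=
    intervalIntegral.integral_hasDerivAt_right
      ((intervalIntegrable_iff_integrableOn_Ioc_of_le hst.le).2
        (hint.mono_set Ioc_subset_Ioi_self))
      ⟨Ioi s, Ioi_mem_nhds hst, hint.aestronglyMeasurable⟩ hcont
  refine (hprim.const_sub (∫ a in Ioi s, h a)).congr_of_eventuallyEq ?_
  filter_upwards [Ioi_mem_nhds hst] with u hu
  exact eq_sub_of_add_eq' <| intervalIntegral.integral_interval_add_Ioi hint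
    (hint.mono_set (Ioi_subset_Ioi hu.le))

theorem setIntegral_pos_of_forall_pos {α : Type*} [MeasurableSpace α] {μ : Measure α}
    {s : Set α} {h : α → ℝ} (hs : MeasurableSet s) (hμ : 0 < μ s) (hint : IntegrableOn h s μ)
    (hpos : ∀ a ∈ s, 0 < h a) : 0 < ∫ a in s, h a ∂μ := by
  rw [setIntegral_pos_iff_support_of_nonneg_ae
    (ae_restrict_of_forall_mem hs fun a ha => (hpos a ha).le) hint]
  have hsub : s ⊆ Function.support h := fun a ha => (hpos a ha).ne'
  rwa [inter_eq_right.2 hsub]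

/-- The tail integral `∫_t^∞ da / (a f(a))`, the reciprocal `1 / g(t)` of the function `g`
attached to `f`. Working with it rather than with `g` keeps reciprocals out of the calculus. -/
noncomputable def logTail (f : ℝ → ℝ) (t : ℝ) : ℝ :=
  ∫ a in Ioi t, 1 / (a * f a)

section LogTail

variable {f : ℝ → ℝ} {s t η δ f' : ℝ}

theorem logTail_pos (ht : 0 ≤ t) (hint : IntegrableOn (fun a => 1 / (a * f a)) (Ioi t))
    (hf : ∀ a > t, 0 < f a) : 0 < logTail f t :=
  setIntegral_pos_of_forall_pos measurableSet_Ioi (by simp) hint fun a ha =>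
    one_div_pos.2 (mul_pos (ht.trans_lt ha) (hf a ha))

theorem hasDerivAt_logTail (hst : s < t) (hint : IntegrableOn (fun a => 1 / (a * f a)) (Ioi s))
    (hcont : ContinuousAt f t) (ht : t ≠ 0) (hft : f t ≠ 0) :
    HasDerivAt (logTail f) (-(1 / (t * f t))) t :=
  hasDerivAt_setIntegral_Ioi hst hint
    (continuousAt_const.div (continuousAt_id.mul hcont) (mul_ne_zero ht hft))

theorem hasDerivAt_logTail_rpow_sq (hη : η ≠ 0) (hδ : 0 < δ) (hδt : δ ^ (-(1 / η)) = t)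
    (hst : s < t) (hint : IntegrableOn (fun a => 1 / (a * f a)) (Ioi s))
    (hcont : ContinuousAt f t) (hft : f t ≠ 0) :
    HasDerivAt (fun x => logTail f (x ^ (-(1 / η))) ^ 2)
      (2 / η * (t ^ η * logTail f t / f t)) δ := by
  have ht : 0 < t := hδt ▸ Real.rpow_pos_of_pos hδ _
  have hrpow : HasDerivAt (fun x : ℝ => x ^ (-(1 / η))) (-(1 / η) * (t / δ)) δ := by
    simpa only [Real.rpow_sub_one hδ.ne', hδt] using
      Real.hasDerivAt_rpow_const (p := -(1 / η)) (Or.inl hδ.ne')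
  have hinv : t ^ η = δ⁻¹ := by
    rw [← hδt, ← Real.rpow_mul hδ.le, neg_mul, one_div_mul_cancel hη, Real.rpow_neg_one]
  have htail := hasDerivAt_logTail hst hint hcont ht.ne' hft
  refine ((htail.comp_of_eq δ hrpow hδt.symm).pow 2).congr_deriv ?_
  rw [hinv, Function.comp_apply, hδt]
  field_simp
  norm_num

theorem hasDerivAt_rpow_mul_logTail_div (hst : s < t)
    (hint : IntegrableOn (fun a => 1 / (a * f a)) (Ioi s)) (hf : HasDerivAt f f' t) (ht : 0 < t)
    (hft : f t ≠ 0) (htail : logTail f t ≠ 0) :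
    HasDerivAt (fun u => u ^ η * logTail f u / f u)
      (t ^ η * logTail f t / (t * f t) * (η - ((logTail f t)⁻¹ / f t + t * f' / f t))) t := by
  have hrpow : HasDerivAt (fun u : ℝ => u ^ η) (η * (t ^ η / t)) t := by
    simpa only [Real.rpow_sub_one ht.ne'] using
      Real.hasDerivAt_rpow_const (p := η) (Or.inl ht.ne')
  refine ((hrpow.mul (hasDerivAt_logTail hst hint hf.continuousAt ht.ne' hft)).div hf
    hft).congr_deriv ?_
  simp only [Pi.mul_apply]
  field_simp
  ring

end LogTail

section Concavity

variable {f : ℝ → ℝ} {η : ℝ}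

theorem monotoneOn_rpow_mul_logTail_div {c : ℝ} (hc : 0 ≤ c)
    (hf_diff : ∀ t > c, DifferentiableAt ℝ f t) (hf_pos : ∀ t > c, 0 < f t)
    (hf_int : ∀ t > c, IntegrableOn (fun a => 1 / (a * f a)) (Ioi t))
    (hη_le : ∀ t > c, (logTail f t)⁻¹ / f t + t * deriv f t / f t ≤ η) :
    MonotoneOn (fun t => t ^ η * logTail f t / f t) (Ioi c) := by
  have htail : ∀ t > c, 0 < logTail f t := fun t ht =>
    logTail_pos (hc.trans ht.le) (hf_int t ht) fun a ha => hf_pos a (ht.trans ha)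
  have hderiv : ∀ t ∈ Ioi c, HasDerivAt (fun u => u ^ η * logTail f u / f u)
      (t ^ η * logTail f t / (t * f t) *
        (η - ((logTail f t)⁻¹ / f t + t * deriv f t / f t))) t := by
    intro t ht
    obtain ⟨s, hs, hst⟩ := exists_between (mem_Ioi.1 ht)
    exact hasDerivAt_rpow_mul_logTail_div hst (hf_int s hs) (hf_diff t ht).hasDerivAt
      (hc.trans_lt ht) (hf_pos t ht).ne' (htail t ht).ne'
  refine monotoneOn_of_hasDerivWithinAt_nonneg (convex_Ioi c)
    (fun t ht => (hderiv t ht).continuousAt.continuousWithinAt)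
    (fun t ht => (hderiv t (interior_subset ht)).hasDerivWithinAt) fun t ht => ?_
  have ht : c < t := interior_subset ht
  have ht₀ : 0 < t := hc.trans_lt ht
  have hft := hf_pos t ht
  have hGt := htail t ht
  exact mul_nonneg (by positivity) (sub_nonneg.2 (hη_le t ht))

theorem concaveOn_logTail_rpow_sq_of_monotoneOn (hη : 0 < η) (hf_cont : ContinuousOn f (Ioi 1))
    (hf_ne : ∀ t > 1, f t ≠ 0)
    (hf_int : ∀ t > 1, IntegrableOn (fun a => 1 / (a * f a)) (Ioi t))
    (hmono : MonotoneOn (fun t => t ^ η * logTail f t / f t) (Ioi 1)) :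
    ConcaveOn ℝ (Ioo 0 1) fun δ => logTail f (δ ^ (-(1 / η))) ^ 2 := by
  have hexp : -(1 / η) < 0 := neg_lt_zero.2 (one_div_pos.2 hη)
  have hmaps : MapsTo (fun δ : ℝ => δ ^ (-(1 / η))) (Ioo 0 1) (Ioi 1) := fun δ hδ =>
    Real.one_lt_rpow_of_pos_of_lt_one_of_neg hδ.1 hδ.2 hexp
  have hanti : AntitoneOn (fun δ : ℝ => δ ^ (-(1 / η))) (Ioo 0 1) :=
    (Real.antitoneOn_rpow_Ioi_of_exponent_nonpos hexp.le).mono Ioo_subset_Ioi_self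
  have hderiv : ∀ δ ∈ Ioo (0 : ℝ) 1, HasDerivAt (fun x => logTail f (x ^ (-(1 / η))) ^ 2)
      (2 / η * ((δ ^ (-(1 / η))) ^ η * logTail f (δ ^ (-(1 / η))) / f (δ ^ (-(1 / η))))) δ := by
    intro δ hδ
    have ht : 1 < δ ^ (-(1 / η)) := hmaps hδ
    obtain ⟨s, hs, hst⟩ := exists_between ht
    exact hasDerivAt_logTail_rpow_sq hη.ne' hδ.1 rfl hst (hf_int s hs)
      (hf_cont.continuousAt (Ioi_mem_nhds ht)) (hf_ne _ ht)
  refine AntitoneOn.concaveOn_of_deriv (convex_Ioo 0 1)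
    (fun δ hδ => (hderiv δ hδ).continuousAt.continuousWithinAt)
    (fun δ hδ => (hderiv δ (interior_subset hδ)).differentiableAt.differentiableWithinAt) ?_
  rw [interior_Ioo]
  refine AntitoneOn.congr ?_ fun δ hδ => (hderiv δ hδ).deriv.symm
  exact (monotone_mul_left_of_nonneg (by positivity)).comp_antitoneOn
    (hmono.comp_AntitoneOn hanti hmaps)

theorem omega_concaveOn_general (hf_diff : ∀ t > 1, DifferentiableAt ℝ f t)
    (hf_pos : ∀ t > 1, 0 < f t)
    (hf_int : ∀ t > 1, IntegrableOn (fun a => 1 / (a * f a)) (Ioi t)) (hη : 0 < η)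
    (hη_le : ∀ t > 1, (logTail f t)⁻¹ / f t + t * deriv f t / f t ≤ η) :
    ConcaveOn ℝ (Ioo 0 1) fun δ => logTail f (δ ^ (-(1 / η))) ^ 2 :=
  concaveOn_logTail_rpow_sq_of_monotoneOn hη
    (fun t ht => (hf_diff t ht).continuousAt.continuousWithinAt) (fun t ht => (hf_pos t ht).ne')
    hf_int (monotoneOn_rpow_mul_logTail_div zero_le_one hf_diff hf_pos hf_int hη_le)

end Concavity

/-- Lemma 2.3 (ii): if `f : [1,∞) → [1,∞)` is continuously differentiable, increasing,
with finite tail integrals, `g(t) := (∫_t^∞ da/(a f(a)))⁻¹`, and `η ∈ (0,1)` satisfies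
`g(t)/f(t) + t f'(t)/f(t) ≤ η` for all `t > 1`, then `ω(δ) := g(δ^{-1/η})^{-2}` is
concave on `(0,1)`. -/
theorem omega_concaveOn (f : ℝ → ℝ)
    (hf_diff : ∀ t ≥ (1 : ℝ), DifferentiableAt ℝ f t)
    (hf_deriv_cont : ContinuousOn (deriv f) (Set.Ici 1))
    (hf_mono : MonotoneOn f (Set.Ici 1))
    (hf_ge : ∀ t ≥ (1 : ℝ), 1 ≤ f t)
    (hf_int : ∀ t ≥ (1 : ℝ), IntegrableOn (fun a => 1 / (a * f a)) (Set.Ioi t))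
    (g : ℝ → ℝ) (hg : ∀ t, g t = (∫ a in Set.Ioi t, 1 / (a * f a))⁻¹)
    (η : ℝ) (hη : η ∈ Set.Ioo (0 : ℝ) 1)
    (hη2 : ∀ t > (1 : ℝ), g t / f t + t * deriv f t / f t ≤ η)
    (ω : ℝ → ℝ) (hω : ∀ δ, ω δ = ((g (δ ^ (-(1 / η))))⁻¹) ^ 2) :
    ConcaveOn ℝ (Set.Ioo 0 1) ω := by
  obtain rfl : g = fun t => (logTail f t)⁻¹ := funext hg
  obtain rfl : ω = fun δ => logTail f (δ ^ (-(1 / η))) ^ 2 := by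
    simpa only [inv_inv] using funext hω
  exact omega_concaveOn_general (fun t ht => hf_diff t ht.le)
    (fun t ht => zero_lt_one.trans_le (hf_ge t ht.le)) (fun t ht => hf_int t ht.le) hη.1 hη2
end
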